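/- The matrix Stieltjes moment problem for the sequence (S_n) has a solution if and only if for every n ∈ ℕ both block Hankel matrices Γ_n = (S_{i+j})_{i,j=0}^n and Γ̃_n = (S_{i+j+1})_{i,j=0}^n are positive semidefinite. -/

import Mathlib

open scoped ComplexOrder

section ComplexMeasureIntegral

open MeasureTheory

/-- The integral of a complex-valued function against a complex (Borel) measure,
defined via the Jordan decompositions of the real and imaginary parts. -/
noncomputable def cmIntegral (μ : ComplexMeasure ℝ) (f : ℝ → ℂ) : ℂ :=
  ((∫ t, f t ∂(ComplexMeasure.re μ).toJordanDecomposition.posPart) -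
      ∫ t, f t ∂(ComplexMeasure.re μ).toJordanDecomposition.negPart) +
    Complex.I •
      ((∫ t, f t ∂(ComplexMeasure.im μ).toJordanDecomposition.posPart) -
        ∫ t, f t ∂(ComplexMeasure.im μ).toJordanDecomposition.negPart)

/-- Integrability with respect to (the total variation of) a complex measure. -/
def cmIntegrableWrt (μ : ComplexMeasure ℝ) (f : ℝ → ℂ) : Prop :=
  Integrable f (ComplexMeasure.re μ).toJordanDecomposition.posPart ∧
    Integrable f (ComplexMeasure.re μ).toJordanDecomposition.negPart ∧
    Integrable f (ComplexMeasure.im μ).toJordanDecomposition.posPart ∧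
    Integrable f (ComplexMeasure.im μ).toJordanDecomposition.negPart

end ComplexMeasureIntegral

/-- A solution of the matrix Stieltjes moment problem for a sequence `S` of Hermitian
`N×N` complex matrices: a family `μ k l` of finite complex Borel measures on `[0,∞)`
(realized as complex measures on `ℝ` vanishing on subsets of `(-∞,0)`) such that for
every vector `v ∈ ℂᴺ` the complex measure `∑ₖₗ vₖ conj(vₗ) μ k l` is a non-negative
measure, the functions `x ↦ xⁿ` are integrable, and `∫_{[0,∞)} xⁿ dμ k l = (S n) k l`. -/
structure IsStieltjesSolution (N : ℕ) (S : ℕ → Matrix (Fin N) (Fin N) ℂ)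
    (μ : Fin N → Fin N → MeasureTheory.ComplexMeasure ℝ) : Prop where
  concentrated : ∀ (k l : Fin N) (s : Set ℝ), MeasurableSet s → s ⊆ Set.Iio 0 → μ k l s = 0
  nonneg : ∀ (v : Fin N → ℂ) (s : Set ℝ), MeasurableSet s →
    0 ≤ ∑ k, ∑ l, v k * (starRingEnd ℂ) (v l) * μ k l s
  integrable : ∀ (n : ℕ) (k l : Fin N),
    cmIntegrableWrt (μ k l) ((Set.Ici (0 : ℝ)).indicator fun t => (t : ℂ) ^ n)
  moment : ∀ (n : ℕ) (k l : Fin N),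
    cmIntegral (μ k l) ((Set.Ici (0 : ℝ)).indicator fun t => (t : ℂ) ^ n) = S n k l

section Helpers

open scoped NNReal
open Matrix MeasureTheory Filter Topology


lemma aux_ker {N : ℕ} {S : ℕ → Matrix (Fin N) (Fin N) ℂ} (n : ℕ)
    (h : (Matrix.of fun p q : Fin (n + 1 + 1) × Fin N =>
          S ((p.1 : ℕ) + (q.1 : ℕ)) p.2 q.2).PosSemidef)
    (x : Fin (n + 1) × Fin N → ℂ)
    (hx : (Matrix.of fun p q : Fin (n + 1) × Fin N =>
          S ((p.1 : ℕ) + (q.1 : ℕ)) p.2 q.2) *ᵥ x = 0) :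
    (Matrix.of fun p q : Fin (n + 1) × Fin N =>
          S ((p.1 : ℕ) + (q.1 : ℕ) + 1) p.2 q.2) *ᵥ x = 0 := by
  let y : Fin (n + 1 + 1) × Fin N → ℂ := fun p =>
    Fin.lastCases (motive := fun _ => ℂ) 0 (fun i => x (i, p.2)) p.1
  have key : ∀ p : Fin (n + 1 + 1) × Fin N, ((Matrix.of fun p q : Fin (n + 1 + 1) × Fin N =>
          S ((p.1 : ℕ) + (q.1 : ℕ)) p.2 q.2) *ᵥ y) p =
      ∑ j : Fin (n + 1), ∑ l : Fin N, S ((p.1 : ℕ) + (j : ℕ)) p.2 l * x (j, l) := by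
    intro p
    simp [Matrix.mulVec, dotProduct, Fintype.sum_prod_type, Fin.sum_univ_castSucc (n := n + 1), y]
  have h0 : (Matrix.of fun p q : Fin (n + 1 + 1) × Fin N =>
          S ((p.1 : ℕ) + (q.1 : ℕ)) p.2 q.2) *ᵥ y = 0 := by
    rw [← h.dotProduct_mulVec_zero_iff]
    simp only [dotProduct, key]
    rw [Fintype.sum_prod_type, Fin.sum_univ_castSucc]
    have hz : ∀ (i : Fin (n + 1)) (k : Fin N),
        ∑ j : Fin (n + 1), ∑ l : Fin N, S ((i : ℕ) + (j : ℕ)) k l * x (j, l) = 0 := by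
      intro i k
      have := congrFun hx (i, k)
      simpa [Matrix.mulVec, dotProduct, Fintype.sum_prod_type] using this
    simp [hz, y]
  ext ⟨i, k⟩
  have := congrFun h0 (i.succ, k)
  rw [key] at this
  simp only [Matrix.mulVec, dotProduct, Fintype.sum_prod_type, Matrix.of_apply]
  simp only [Fin.val_succ, Pi.zero_apply] at this ⊢
  rw [← this]
  refine Finset.sum_congr rfl fun j _ => Finset.sum_congr rfl fun l _ => ?_
  rw [show (i : ℕ) + j + 1 = i + 1 + j by ring]

/-- square root and pseudo-inverse. -/
lemma aux_sqrt {ι : Type*} [Fintype ι] [DecidableEq ι] {Γ : Matrix ι ι ℂ} (h : Γ.PosSemidef) :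
    ∃ G P : Matrix ι ι ℂ, Gᴴ = G ∧ Pᴴ = P ∧ G * G = Γ ∧ P * Γ = G ∧ Γ * (P * G) = Γ := by
  obtain ⟨V, d, hd, hV, hΓ⟩ : ∃ (V : Matrix ι ι ℂ) (d : ι → ℝ), (∀ i, 0 ≤ d i) ∧
      Vᴴ * V = 1 ∧ Γ = V * diagonal (fun i => (d i : ℂ)) * Vᴴ := by
    refine ⟨h.1.eigenvectorUnitary, h.1.eigenvalues, h.eigenvalues_nonneg, ?_, ?_⟩
    · exact Unitary.coe_star_mul_self _
    · conv_lhs => rw [h.1.spectral_theorem]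
      simp [Unitary.conjStarAlgAut_apply, Matrix.star_eq_conjTranspose, Function.comp_def]
  have hm : ∀ a b : ι → ℂ, (V * diagonal a * Vᴴ) * (V * diagonal b * Vᴴ) =
      V * diagonal (fun i => a i * b i) * Vᴴ := by
    intro a b
    calc _ = V * diagonal a * (Vᴴ * V) * diagonal b * Vᴴ := by simp only [Matrix.mul_assoc]
      _ = _ := by rw [hV, Matrix.mul_one, Matrix.mul_assoc V, diagonal_mul_diagonal]
  have hs : ∀ a : ι → ℝ, (V * diagonal (fun i => (a i : ℂ)) * Vᴴ)ᴴ =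
      V * diagonal (fun i => (a i : ℂ)) * Vᴴ := by
    intro a
    simp [Matrix.conjTranspose_mul, Matrix.mul_assoc, diagonal_conjTranspose, Pi.star_def]
  refine ⟨V * diagonal (fun i => ((Real.sqrt (d i) : ℝ) : ℂ)) * Vᴴ,
    V * diagonal (fun i => (((Real.sqrt (d i))⁻¹ : ℝ) : ℂ)) * Vᴴ, hs _, hs _, ?_, ?_, ?_⟩
  · rw [hm, hΓ]; congr; ext i; rw [← Complex.ofReal_mul, Real.mul_self_sqrt (hd i)]
  · rw [hΓ, hm]; congr; ext i; rw [← Complex.ofReal_mul]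
    congr 1
    by_cases h0 : Real.sqrt (d i) = 0
    · simp [h0]
    · field_simp; rw [Real.sq_sqrt (hd i)]
  · rw [hΓ, hm, hm]; congr; ext i; rw [← Complex.ofReal_mul, ← Complex.ofReal_mul]
    congr 1
    by_cases h0 : Real.sqrt (d i) = 0
    · have : d i = 0 := by rwa [Real.sqrt_eq_zero (hd i)] at h0
      simp [this]
    · field_simp

lemma finite_rep {N : ℕ} {S : ℕ → Matrix (Fin N) (Fin N) ℂ}
    (h1 : ∀ n : ℕ, (Matrix.of fun p q : Fin (n + 1) × Fin N =>
          S ((p.1 : ℕ) + (q.1 : ℕ)) p.2 q.2).PosSemidef)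
    (h2 : ∀ n : ℕ, (Matrix.of fun p q : Fin (n + 1) × Fin N =>
          S ((p.1 : ℕ) + (q.1 : ℕ) + 1) p.2 q.2).PosSemidef) (n : ℕ) :
    ∃ (lam : Fin (n + 1) × Fin N → ℝ≥0) (w : Fin (n + 1) × Fin N → Fin N → ℂ),
      ∀ p ≤ 2 * n, ∀ k l, S p k l =
        ∑ a, ((lam a : ℝ) : ℂ) ^ p * (w a k * (starRingEnd ℂ) (w a l)) := by
  set Γ := (Matrix.of fun p q : Fin (n + 1) × Fin N =>
          S ((p.1 : ℕ) + (q.1 : ℕ)) p.2 q.2) with hΓdef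
  set Γ' := (Matrix.of fun p q : Fin (n + 1) × Fin N =>
          S ((p.1 : ℕ) + (q.1 : ℕ) + 1) p.2 q.2) with hΓ'def
  obtain ⟨G, P, hG, hP, hGG, hPΓ, hΓPG⟩ := aux_sqrt (h1 n)
  have hQ : Γ' * (P * G) = Γ' := by
    have : Γ' * (P * G - 1) = 0 := by
      ext i j
      have h0 : Γ *ᵥ (fun i => (P * G - 1) i j) = 0 := by
        have h3 : Γ * (P * G - 1) = 0 := by rw [mul_sub, hΓPG, mul_one, sub_self]
        ext i; exact congrFun (congrFun h3 i) j
      exact congrFun (aux_ker n (h1 (n + 1)) _ h0) i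
    rw [mul_sub, mul_one, sub_eq_zero] at this
    exact this
  have hA : (P * Γ' * P).PosSemidef := by
    have := (h2 n).mul_mul_conjTranspose_same P
    rwa [hP] at this
  set A := P * Γ' * P with hAdef
  have hAG : A * G = P * Γ' := by
    rw [hAdef, Matrix.mul_assoc, Matrix.mul_assoc, hQ]
  -- shift
  have hshift : ∀ (a : Fin (n + 1) × Fin N) (j : ℕ) (hj : j + 1 < n + 1) (l : Fin N),
      (A * G) a (⟨j, by omega⟩, l) = G a (⟨j + 1, hj⟩, l) := by
    intro a j hj l
    rw [hAG, ← hPΓ, Matrix.mul_apply, Matrix.mul_apply]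
    refine Finset.sum_congr rfl fun b _ => ?_
    simp [hΓ'def, add_assoc]
  have hpow : ∀ (j : ℕ) (hj : j < n + 1) (a : Fin (n + 1) × Fin N) (l : Fin N),
      (A ^ j * G) a (⟨0, by omega⟩, l) = G a (⟨j, hj⟩, l) := by
    intro j
    induction j with
    | zero => intro hj a l; simp
    | succ j ih =>
      intro hj a l
      rw [← hshift a j hj l, pow_succ', Matrix.mul_assoc, Matrix.mul_apply, Matrix.mul_apply]
      exact Finset.sum_congr rfl fun b _ => by rw [ih (by omega)]
  have hAh : ∀ j, (A ^ j)ᴴ = A ^ j := fun j => by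
    rw [Matrix.conjTranspose_pow, hA.1]
  have hmom : ∀ p ≤ 2 * n, ∀ k l, S p k l = (Gᴴ * A ^ p * G) (⟨0, by omega⟩, k) (⟨0, by omega⟩, l) := by
    intro p hp k l
    obtain ⟨i, j, hi, hj, rfl⟩ : ∃ i j, i < n + 1 ∧ j < n + 1 ∧ p = i + j :=
      ⟨p / 2, p - p / 2, by omega, by omega, by omega⟩
    have e1 : S (i + j) k l = Γ (⟨i, hi⟩, k) (⟨j, hj⟩, l) := by simp [hΓdef]
    have e2 : Gᴴ * A ^ (i + j) * G = (A ^ i * G)ᴴ * (A ^ j * G) := by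
      rw [Matrix.conjTranspose_mul, hAh, pow_add]; simp only [Matrix.mul_assoc]
    have hGG' : G * G = Γ := hGG
    rw [e1, e2, ← hGG', Matrix.mul_apply, Matrix.mul_apply]
    refine Finset.sum_congr rfl fun b _ => ?_
    rw [hpow j hj, Matrix.conjTranspose_apply, hpow i hi, ← Matrix.conjTranspose_apply, hG]
  obtain ⟨U, d, hd, hU, hAU⟩ : ∃ (V : Matrix (Fin (n + 1) × Fin N) (Fin (n + 1) × Fin N) ℂ)
      (d : Fin (n + 1) × Fin N → ℝ), (∀ i, 0 ≤ d i) ∧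
      Vᴴ * V = 1 ∧ A = V * diagonal (fun i => (d i : ℂ)) * Vᴴ := by
    refine ⟨hA.1.eigenvectorUnitary, hA.1.eigenvalues, hA.eigenvalues_nonneg, ?_, ?_⟩
    · exact Unitary.coe_star_mul_self _
    · conv_lhs => rw [hA.1.spectral_theorem]
      simp [Unitary.conjStarAlgAut_apply, Matrix.star_eq_conjTranspose, Function.comp_def]
  have hU' : U * Uᴴ = 1 := mul_eq_one_comm.mp hU
  have hAp : ∀ p, A ^ p = U * diagonal (fun i => (d i : ℂ) ^ p) * Uᴴ := by
    intro p
    induction p with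
    | zero => simp [hU']
    | succ p ih =>
      rw [pow_succ, ih]
      conv_lhs => rw [hAU]
      calc _ = U * diagonal (fun i => (d i : ℂ) ^ p) * (Uᴴ * U) * diagonal (fun i => (d i : ℂ)) * Uᴴ := by
            simp only [Matrix.mul_assoc]
        _ = _ := by
          rw [hU, Matrix.mul_one, Matrix.mul_assoc U, diagonal_mul_diagonal]
          simp only [pow_succ]
  refine ⟨fun a => Real.toNNReal (d a), fun a k => star ((Uᴴ * G) a (⟨0, by omega⟩, k)), ?_⟩
  intro p hp k l
  rw [hmom p hp, hAp]
  have : Gᴴ * (U * diagonal (fun i => (d i : ℂ) ^ p) * Uᴴ) * G =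
      (Uᴴ * G)ᴴ * (diagonal (fun i => (d i : ℂ) ^ p) * (Uᴴ * G)) := by
    rw [Matrix.conjTranspose_mul, Matrix.conjTranspose_conjTranspose]; simp only [Matrix.mul_assoc]
  rw [this, Matrix.mul_apply]
  refine Finset.sum_congr rfl fun a _ => ?_
  rw [Matrix.diagonal_mul, Matrix.conjTranspose_apply]
  simp only [Real.coe_toNNReal _ (hd a), Complex.star_def, Complex.conj_conj]
  ring


abbrev StE (N : ℕ) : Type := ℝ≥0 × (Fin N → Metric.closedBall (0 : ℂ) 1)

lemma disc_measure {N : ℕ} {S : ℕ → Matrix (Fin N) (Fin N) ℂ} {α : Type} [Fintype α] (n : ℕ)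
    (lam : α → ℝ≥0) (w : α → Fin N → ℂ)
    (h : ∀ p ≤ n, ∀ k l, S p k l =
        ∑ a, ((lam a : ℝ) : ℂ) ^ p * (w a k * (starRingEnd ℂ) (w a l))) :
    ∃ ν : FiniteMeasure (StE N), (∀ g : StE N → ℂ, Integrable g (ν : Measure (StE N))) ∧
      (∀ g : StE N → ℝ, Integrable g (ν : Measure (StE N))) ∧
      ∀ p ≤ n, (∀ k l, ∫ x, ((x.1 : ℝ) : ℂ) ^ p * ((x.2 k : ℂ) * (starRingEnd ℂ) (x.2 l : ℂ))
          ∂(ν : Measure (StE N)) = S p k l) ∧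
        ∫ x, (x.1 : ℝ) ^ p ∂(ν : Measure (StE N)) = ∑ k, (S p k k).re := by
  classical
  let m : α → ℝ≥0 := fun a => ∑ k, ‖w a k‖₊ ^ 2
  have hle : ∀ a k, ‖w a k‖₊ ≤ NNReal.sqrt (m a) := by
    intro a k
    rw [NNReal.le_sqrt_iff_sq_le]
    exact Finset.single_le_sum (f := fun k => ‖w a k‖₊ ^ 2) (fun _ _ => zero_le) (Finset.mem_univ k)
  let u : α → Fin N → Metric.closedBall (0 : ℂ) 1 := fun a k =>
    ⟨w a k / ((NNReal.sqrt (m a) : ℝ) : ℂ), by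
      rw [mem_closedBall_zero_iff, norm_div, Complex.norm_real]
      have : ‖w a k‖ ≤ (NNReal.sqrt (m a) : ℝ) := hle a k
      apply div_le_one_of_le₀ _ (norm_nonneg _)
      exact this.trans (le_abs_self _)⟩
  let ν₀ : Measure (StE N) := ∑ a, (m a) • Measure.dirac (lam a, u a)
  have hν₀ : IsFiniteMeasure ν₀ := by
    refine ⟨?_⟩
    simp only [ν₀, Measure.finsetSum_apply]
    exact ENNReal.sum_lt_top.2 fun a _ => measure_lt_top _ _
  have hic : ∀ g : StE N → ℂ, ∀ a, Integrable g ((m a) • Measure.dirac (lam a, u a)) := by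
    intro g a
    exact (integrable_dirac (by simp)).smul_measure_nnreal
  have hir : ∀ g : StE N → ℝ, ∀ a, Integrable g ((m a) • Measure.dirac (lam a, u a)) := by
    intro g a
    exact (integrable_dirac (by simp)).smul_measure_nnreal
  refine ⟨⟨ν₀, hν₀⟩, fun g => ?_, fun g => ?_, fun p hp => ⟨fun k l => ?_, ?_⟩⟩
  · exact integrable_finsetSum_measure.2 fun a _ => hic g a
  · exact integrable_finsetSum_measure.2 fun a _ => hir g a
  · change ∫ x, _ ∂ν₀ = _
    rw [integral_finsetSum_measure fun a _ => hic _ a, h p hp]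
    refine Finset.sum_congr rfl fun a _ => ?_
    rw [integral_smul_nnreal_measure, integral_dirac]
    simp only [u, map_div₀, Complex.conj_ofReal]
    by_cases h0 : m a = 0
    · have : w a k = 0 := by
        have := hle a k
        simpa [h0] using this
      simp [h0, this]
    · have h1 : ((NNReal.sqrt (m a) : ℝ) : ℂ) ≠ 0 := by
        norm_cast; simpa using h0
      have h2 : ((NNReal.sqrt (m a) : ℝ) : ℂ) ^ 2 = ((m a : ℝ) : ℂ) := by
        norm_cast; simp
      rw [NNReal.smul_def, Complex.real_smul, ← h2]
      field_simp
  · change ∫ x, _ ∂ν₀ = _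
    rw [integral_finsetSum_measure fun a _ => hir _ a]
    have : ∀ k, (S p k k).re = ∑ a, (lam a : ℝ) ^ p * ‖w a k‖ ^ 2 := by
      intro k
      rw [h p hp, Complex.re_sum]
      refine Finset.sum_congr rfl fun a _ => ?_
      rw [Complex.mul_conj, ← Complex.ofReal_pow, ← Complex.ofReal_mul, Complex.ofReal_re,
        Complex.normSq_eq_norm_sq]
    simp only [this]
    rw [Finset.sum_comm]
    refine Finset.sum_congr rfl fun a _ => ?_
    rw [integral_smul_nnreal_measure, integral_dirac, NNReal.smul_def, smul_eq_mul, mul_comm,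
      ← Finset.mul_sum]
    simp [m]

lemma limit_measure {N : ℕ} {S : ℕ → Matrix (Fin N) (Fin N) ℂ}
    (hν : ∀ n : ℕ, ∃ ν : FiniteMeasure (StE N), (∀ g : StE N → ℂ, Integrable g (ν : Measure (StE N))) ∧
      (∀ g : StE N → ℝ, Integrable g (ν : Measure (StE N))) ∧
      ∀ p ≤ n, (∀ k l, ∫ x, ((x.1 : ℝ) : ℂ) ^ p * ((x.2 k : ℂ) * (starRingEnd ℂ) (x.2 l : ℂ))
          ∂(ν : Measure (StE N)) = S p k l) ∧
        ∫ x, (x.1 : ℝ) ^ p ∂(ν : Measure (StE N)) = ∑ k, (S p k k).re) :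
    ∃ ν : Measure (StE N), IsFiniteMeasure ν ∧
      (∀ p : ℕ, Integrable (fun x : StE N => (x.1 : ℝ) ^ p) ν) ∧
      ∀ p k l, ∫ x, ((x.1 : ℝ) : ℂ) ^ p * ((x.2 k : ℂ) * (starRingEnd ℂ) (x.2 l : ℂ)) ∂ν
        = S p k l := by
  choose ν hνc hνr hνm using hν
  let T : ℕ → ℝ := fun p => ∑ k, (S p k k).re
  have hT : ∀ p, ∀ n ≥ p, ∫ x, (x.1 : ℝ) ^ p ∂(ν n : Measure (StE N)) = T p :=
    fun p n hn => (hνm n p hn).2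
  have hT0 : ∀ p, 0 ≤ T p := fun p => by
    rw [← hT p p le_rfl]; exact integral_nonneg fun x => by positivity
  -- compactness
  obtain ⟨U, hU, ρ, hρ⟩ : ∃ U : Ultrafilter ℕ, (U : Filter ℕ) ≤ atTop ∧ ∃ ρ : FiniteMeasure (StE N),
      Tendsto ν U (𝓝 ρ) := by
    have hcomp := isCompact_setOfPred_finiteMeasure_mass_le_compl_isCompact_le (E := StE N)
      (u := fun j => (T 1).toNNReal * ((j : ℝ≥0) + 1)⁻¹)
      (K := fun j => Set.Icc 0 ((j : ℝ≥0) + 1) ×ˢ Set.univ) (T 0).toNNReal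
      (by
        have : Tendsto (fun j : ℕ => ((j : ℝ≥0) + 1)⁻¹) atTop (𝓝 0) := by
          rw [← NNReal.tendsto_coe]
          simpa using tendsto_one_div_add_atTop_nhds_zero_nat (𝕜 := ℝ)
        simpa using this.const_mul (T 1).toNNReal)
      (fun j => isCompact_Icc.prod isCompact_univ) (Or.inl inferInstance)
    have hmem : ∀ n ≥ 1, ν n ∈ {μ : FiniteMeasure (StE N) | μ.mass ≤ (T 0).toNNReal ∧
        ∀ j : ℕ, μ (Set.Icc 0 ((j : ℝ≥0) + 1) ×ˢ Set.univ)ᶜ ≤ (T 1).toNNReal * ((j : ℝ≥0) + 1)⁻¹} := by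
      intro n hn
      refine ⟨?_, fun j => ?_⟩
      · have := hT 0 n (by omega)
        simp only [pow_zero, integral_const, smul_eq_mul, mul_one] at this
        rw [← this]
        apply le_of_eq
        rw [← NNReal.coe_inj, Real.coe_toNNReal _ measureReal_nonneg]
        rfl
      · have hM := mul_meas_ge_le_integral_of_nonneg (μ := (ν n : Measure (StE N)))
          (f := fun x => (x.1 : ℝ) ^ 1) (Eventually.of_forall fun x => by positivity)
          (hνr n _) ((j : ℝ) + 1)
        rw [hT 1 n hn] at hM
        have hsub : (Set.Icc 0 ((j : ℝ≥0) + 1) ×ˢ (Set.univ : Set (Fin N → Metric.closedBall (0 : ℂ) 1)))ᶜ ⊆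
            {x : StE N | (j : ℝ) + 1 ≤ (x.1 : ℝ) ^ 1} := by
          intro x hx
          simp only [Set.mem_compl_iff, Set.mem_prod, Set.mem_Icc, zero_le, true_and, Set.mem_univ,
            and_true, not_le] at hx
          simp only [pow_one, Set.mem_ofPred_eq]
          exact_mod_cast hx.le
        have h1 := measureReal_mono (μ := (ν n : Measure (StE N))) hsub
        rw [← NNReal.coe_le_coe]
        push_cast
        rw [Real.coe_toNNReal _ (hT0 1), ← div_eq_mul_inv, le_div_iff₀ (by positivity)]
        calc _ ≤ _ := mul_le_mul_of_nonneg_right h1 (by positivity)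
          _ ≤ _ := by rw [mul_comm]; exact hM
    obtain ⟨ρ, -, hρ⟩ := hcomp.exists_mapClusterPt (f := atTop) (u := ν)
      (by simp only [le_principal_iff, mem_map]; filter_upwards [eventually_ge_atTop 1] with n hn using hmem n hn)
    obtain ⟨U, hU, h⟩ := mapClusterPt_iff_ultrafilter.1 hρ
    exact ⟨U, hU, ρ, h⟩
  have hlimR := FiniteMeasure.tendsto_iff_forall_integral_tendsto.1 hρ
  have hlimC := (FiniteMeasure.tendsto_iff_forall_integral_rclike_tendsto ℂ).1 hρ
  -- moments of ρ
  have hmom : ∀ p, ∫⁻ x, ENNReal.ofReal ((x.1 : ℝ) ^ p) ∂(ρ : Measure (StE N)) ≤ ENNReal.ofReal (T p) := by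
    intro p
    have htr : ∀ R : ℕ, ∫⁻ x, ENNReal.ofReal (min ((x.1 : ℝ) ^ p) R) ∂(ρ : Measure (StE N))
        ≤ ENNReal.ofReal (T p) := by
      intro R
      have hb : ∀ x : StE N, ‖min ((x.1 : ℝ) ^ p) R‖ ≤ R := by
        intro x
        rw [Real.norm_of_nonneg (le_min (by positivity) (by positivity))]
        exact min_le_right _ _
      let g : BoundedContinuousFunction (StE N) ℝ := BoundedContinuousFunction.ofNormedAddCommGroup
        (fun x => min ((x.1 : ℝ) ^ p) R) (by fun_prop) R hb
      change ∫⁻ x, ENNReal.ofReal (g x) ∂(ρ : Measure (StE N)) ≤ _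
      rw [← ofReal_integral_eq_lintegral_ofReal (g.integrable _)
        (Eventually.of_forall fun x => le_min (by positivity) (by positivity))]
      apply ENNReal.ofReal_le_ofReal
      refine le_of_tendsto (hlimR g) ?_
      filter_upwards [hU (eventually_ge_atTop p)] with n hn
      rw [← hT p n hn]
      exact integral_mono (g.integrable _) (hνr n _) fun x => min_le_left _ _
    have hsup : ∀ x : StE N, ENNReal.ofReal ((x.1 : ℝ) ^ p) =
        ⨆ R : ℕ, ENNReal.ofReal (min ((x.1 : ℝ) ^ p) R) := by
      intro x
      apply le_antisymm
      · obtain ⟨R, hR⟩ := exists_nat_ge ((x.1 : ℝ) ^ p)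
        refine le_iSup_of_le R ?_
        rw [min_eq_left hR]
      · exact iSup_le fun R => ENNReal.ofReal_le_ofReal (min_le_left _ _)
    simp_rw [hsup]
    rw [lintegral_iSup]
    · exact iSup_le htr
    · intro R; fun_prop
    · intro R R' h x
      exact ENNReal.ofReal_le_ofReal (min_le_min le_rfl (by exact_mod_cast h))
  have hInt : ∀ p, Integrable (fun x : StE N => (x.1 : ℝ) ^ p) (ρ : Measure (StE N)) := by
    intro p
    refine ⟨by fun_prop, ?_⟩
    rw [hasFiniteIntegral_iff_ofReal (Eventually.of_forall fun x => by positivity)]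
    exact (hmom p).trans_lt ENNReal.ofReal_lt_top
  have hintle : ∀ p, ∫ x, (x.1 : ℝ) ^ p ∂(ρ : Measure (StE N)) ≤ T p := by
    intro p
    rw [← ENNReal.ofReal_le_ofReal_iff (hT0 p), ofReal_integral_eq_lintegral_ofReal (hInt p)
      (Eventually.of_forall fun x => by positivity)]
    exact hmom p
  refine ⟨ρ, inferInstance, hInt, fun p k l => ?_⟩
  let f : StE N → ℂ := fun x => ((x.1 : ℝ) : ℂ) ^ p * ((x.2 k : ℂ) * (starRingEnd ℂ) (x.2 l : ℂ))
  have hfc : Continuous f := by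
    have : Continuous fun z : ℂ => (starRingEnd ℂ) z := Complex.continuous_conj
    fun_prop
  have hfb : ∀ x, ‖f x‖ ≤ (x.1 : ℝ) ^ p := by
    intro x
    have h1 : ‖(x.2 k : ℂ)‖ ≤ 1 := mem_closedBall_zero_iff.1 (x.2 k).2
    have h2 : ‖(x.2 l : ℂ)‖ ≤ 1 := mem_closedBall_zero_iff.1 (x.2 l).2
    simp only [f, norm_mul, norm_pow, Complex.norm_real, RCLike.norm_conj, Real.norm_eq_abs, NNReal.abs_eq]
    have : ‖(x.2 k : ℂ)‖ * ‖(x.2 l : ℂ)‖ ≤ 1 := mul_le_one₀ h1 (norm_nonneg _) h2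
    exact mul_le_of_le_one_right (by positivity) this
  have hfi : Integrable f (ρ : Measure (StE N)) :=
    (hInt p).mono' hfc.aestronglyMeasurable (Eventually.of_forall hfb)
  have hmain : ∀ ε : ℝ, 0 < ε → ‖∫ x, f x ∂(ρ : Measure (StE N)) - S p k l‖ ≤ ε * (T (2 * p) + T (2 * p)) := by
    intro ε hε
    let c : StE N → ℝ := fun x => (1 + ε * (x.1 : ℝ) ^ p)⁻¹
    have hcpos : ∀ x : StE N, 0 < 1 + ε * (x.1 : ℝ) ^ p := fun x => by positivity
    have hcc : Continuous c := Continuous.inv₀ (by fun_prop) fun x => (hcpos x).ne'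
    have hgb : ∀ x, ‖(c x : ℂ) * f x‖ ≤ ε⁻¹ := by
      intro x
      rw [norm_mul, Complex.norm_real, Real.norm_of_nonneg (inv_nonneg.2 (hcpos x).le)]
      calc _ ≤ (1 + ε * (x.1 : ℝ) ^ p)⁻¹ * (x.1 : ℝ) ^ p :=
            mul_le_mul_of_nonneg_left (hfb x) (inv_nonneg.2 (hcpos x).le)
        _ ≤ ε⁻¹ := by
          rw [inv_mul_le_iff₀ (hcpos x)]
          have : (1 + ε * (x.1 : ℝ) ^ p) * ε⁻¹ = ε⁻¹ + (x.1 : ℝ) ^ p := by field_simp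
          rw [this]
          have := inv_pos.2 hε
          linarith
    let g : BoundedContinuousFunction (StE N) ℂ := BoundedContinuousFunction.ofNormedAddCommGroup
      (fun x => (c x : ℂ) * f x) (by fun_prop) ε⁻¹ hgb
    have hd : ∀ x, ‖f x - g x‖ ≤ ε * (x.1 : ℝ) ^ (2 * p) := by
      intro x
      have : f x - g x = ((1 - c x : ℝ) : ℂ) * f x := by
        change f x - (c x : ℂ) * f x = _
        push_cast; ring
      rw [this, norm_mul, Complex.norm_real]
      have h1 : 1 - c x = (ε * (x.1 : ℝ) ^ p) * c x := by
        have := (hcpos x).ne'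
        simp only [c]; field_simp; ring
      have h2 : c x ≤ 1 := inv_le_one_of_one_le₀ (by
        have : 0 ≤ ε * (x.1 : ℝ) ^ p := by positivity
        linarith)
      have h3 : 0 ≤ c x := inv_nonneg.2 (hcpos x).le
      rw [h1, Real.norm_of_nonneg (by positivity), two_mul, pow_add, ← mul_assoc]
      apply mul_le_mul _ (hfb x) (norm_nonneg _) (by positivity)
      exact mul_le_of_le_one_right (by positivity) h2
    have hA : ‖∫ x, f x ∂(ρ : Measure (StE N)) - ∫ x, g x ∂(ρ : Measure (StE N))‖ ≤ ε * T (2 * p) := by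
      rw [← integral_sub hfi (g.integrable _)]
      calc _ ≤ ∫ x, ε * (x.1 : ℝ) ^ (2 * p) ∂(ρ : Measure (StE N)) :=
            norm_integral_le_of_norm_le ((hInt _).const_mul ε) (Eventually.of_forall hd)
        _ ≤ _ := by rw [integral_const_mul]; exact mul_le_mul_of_nonneg_left (hintle _) hε.le
    have hB : ∀ n ≥ 2 * p, ‖∫ x, g x ∂(ν n : Measure (StE N)) - S p k l‖ ≤ ε * T (2 * p) := by
      intro n hn
      rw [← (hνm n p (by omega)).1 k l, norm_sub_rev, ← integral_sub (hνc n _) (g.integrable _)]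
      calc _ ≤ ∫ x, ε * (x.1 : ℝ) ^ (2 * p) ∂(ν n : Measure (StE N)) :=
            norm_integral_le_of_norm_le (hνr n _) (Eventually.of_forall hd)
        _ ≤ _ := by rw [integral_const_mul, hT _ n hn]
    have hC : ‖∫ x, g x ∂(ρ : Measure (StE N)) - S p k l‖ ≤ ε * T (2 * p) := by
      refine le_of_tendsto ((hlimC g).sub_const (S p k l)).norm ?_
      filter_upwards [hU (eventually_ge_atTop (2 * p))] with n hn using hB n hn
    calc _ ≤ _ := norm_sub_le_norm_sub_add_norm_sub _ (∫ x, g x ∂(ρ : Measure (StE N))) _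
      _ ≤ _ := by rw [mul_add]; exact add_le_add hA hC
  have h0 : ‖∫ x, f x ∂(ρ : Measure (StE N)) - S p k l‖ ≤ 0 := by
    have ht : Tendsto (fun ε : ℝ => ε * (T (2 * p) + T (2 * p))) (𝓝[>] 0) (𝓝 0) := by
      have : Tendsto (fun ε : ℝ => ε * (T (2 * p) + T (2 * p))) (𝓝 0) (𝓝 (0 * (T (2 * p) + T (2 * p)))) :=
        tendsto_id.mul_const _
      rw [zero_mul] at this
      exact this.mono_left nhdsWithin_le_nhds
    refine ge_of_tendsto ht ?_
    filter_upwards [self_mem_nhdsWithin] with ε hε using hmain ε hε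
  exact sub_eq_zero.1 (norm_le_zero_iff.1 h0)


lemma sm_parts (μ₁ μ₂ : Measure ℝ) [IsFiniteMeasure μ₁] [IsFiniteMeasure μ₂] (f : ℝ → ℂ)
    (h1 : Integrable f μ₁) (h2 : Integrable f μ₂) :
    Integrable f (μ₁.toSignedMeasure - μ₂.toSignedMeasure).toJordanDecomposition.posPart ∧
    Integrable f (μ₁.toSignedMeasure - μ₂.toSignedMeasure).toJordanDecomposition.negPart ∧
    ∫ x, f x ∂(μ₁.toSignedMeasure - μ₂.toSignedMeasure).toJordanDecomposition.posPart -
      ∫ x, f x ∂(μ₁.toSignedMeasure - μ₂.toSignedMeasure).toJordanDecomposition.negPart =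
    ∫ x, f x ∂μ₁ - ∫ x, f x ∂μ₂ := by
  rw [Measure.toJordanDecomposition_toSignedMeasure_sub,
    Measure.jordanDecompositionOfToSignedMeasureSub_posPart,
    Measure.jordanDecompositionOfToSignedMeasureSub_negPart]
  have i1 : Integrable f (μ₁ - μ₂) := h1.mono_measure Measure.sub_le
  have i2 : Integrable f (μ₂ - μ₁) := h2.mono_measure Measure.sub_le
  refine ⟨i1, i2, ?_⟩
  have : (μ₁ - μ₂) + μ₂ = (μ₂ - μ₁) + μ₁ := by
    rw [← Measure.toSignedMeasure_eq_toSignedMeasure_iff, Measure.toSignedMeasure_add,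
      Measure.toSignedMeasure_add]
    have := Measure.sub_toSignedMeasure_eq_toSignedMeasure_sub (μ := μ₁) (ν := μ₂)
    rw [sub_eq_sub_iff_add_eq_add] at this
    rw [← this.symm.trans (add_comm _ _)]
  have h3 := congrArg (fun m => ∫ x, f x ∂m) this
  simp only [integral_add_measure i1 h2, integral_add_measure i2 h1] at h3
  linear_combination h3

lemma sm_exists {X : Type*} [MeasurableSpace X] (ν : Measure X) [IsFiniteMeasure ν]
    (t : X → ℝ) (ht : Measurable t) (φ : X → ℝ) (hφ : Measurable φ) (hb : ∀ x, |φ x| ≤ 1) :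
    ∃ s : SignedMeasure ℝ, (∀ A, MeasurableSet A → s A = ∫ x in t ⁻¹' A, φ x ∂ν) ∧
      ∀ f : ℝ → ℂ, Measurable f → Integrable (fun x => f (t x)) ν →
        Integrable f s.toJordanDecomposition.posPart ∧
        Integrable f s.toJordanDecomposition.negPart ∧
        ∫ x, f x ∂s.toJordanDecomposition.posPart - ∫ x, f x ∂s.toJordanDecomposition.negPart =
          ∫ x, (φ x : ℂ) * f (t x) ∂ν := by
  have h0 : ∀ x, 0 ≤ 1 + φ x := fun x => by linarith [(abs_le.1 (hb x)).1]
  have hφi : Integrable φ ν :=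
    (integrable_const (1 : ℝ)).mono' hφ.aestronglyMeasurable (Eventually.of_forall hb)
  have h1i : Integrable (fun x => 1 + φ x) ν := (integrable_const (1 : ℝ)).add hφi
  let κ : Measure X := ν.withDensity fun x => ENNReal.ofReal (1 + φ x)
  have hκ : IsFiniteMeasure κ := isFiniteMeasure_withDensity_ofReal h1i.2
  have hmeas : Measurable fun x => ENNReal.ofReal (1 + φ x) := by fun_prop
  refine ⟨(κ.map t).toSignedMeasure - (ν.map t).toSignedMeasure, ?_, ?_⟩
  · intro A hA
    rw [Measure.toSignedMeasure_sub_apply hA, map_measureReal_apply ht hA,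
      map_measureReal_apply ht hA]
    have hA' := ht hA
    have : κ.real (t ⁻¹' A) = ∫ x in t ⁻¹' A, (1 + φ x) ∂ν := by
      rw [integral_eq_lintegral_of_nonneg_ae (Eventually.of_forall h0)
        (by fun_prop), measureReal_def, withDensity_apply _ hA']
    rw [this, integral_add (integrable_const _) hφi.integrableOn]
    simp
  · intro f hf hfi
    have hprod : Integrable (fun x => (φ x : ℂ) * f (t x)) ν := by
      refine hfi.norm.mono' (by fun_prop) (Eventually.of_forall fun x => ?_)
      rw [norm_mul, Complex.norm_real]
      exact mul_le_of_le_one_left (norm_nonneg _) (hb x)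
    have hs : ∀ x, (ENNReal.ofReal (1 + φ x)).toReal • f (t x) = f (t x) + (φ x : ℂ) * f (t x) := by
      intro x
      rw [ENNReal.toReal_ofReal (h0 x), Complex.real_smul]; push_cast; ring
    have hκf : Integrable (fun x => f (t x)) κ := by
      rw [integrable_withDensity_iff_integrable_smul' hmeas (Eventually.of_forall fun _ => ENNReal.ofReal_lt_top)]
      simp_rw [hs]
      exact hfi.add hprod
    have := sm_parts (κ.map t) (ν.map t) f
      ((integrable_map_measure hf.aestronglyMeasurable ht.aemeasurable).2 hκf)
      ((integrable_map_measure hf.aestronglyMeasurable ht.aemeasurable).2 hfi)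
    refine ⟨this.1, this.2.1, this.2.2.trans ?_⟩
    rw [integral_map ht.aemeasurable hf.aestronglyMeasurable,
      integral_map ht.aemeasurable hf.aestronglyMeasurable,
      integral_withDensity_eq_integral_toReal_smul hmeas (Eventually.of_forall fun _ => ENNReal.ofReal_lt_top)]
    simp_rw [hs]
    rw [integral_add hfi hprod]
    ring

lemma backward {N : ℕ} {S : ℕ → Matrix (Fin N) (Fin N) ℂ} (ν : Measure (StE N)) [IsFiniteMeasure ν]
    (hInt : ∀ p : ℕ, Integrable (fun x : StE N => (x.1 : ℝ) ^ p) ν)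
    (hmom : ∀ p k l, ∫ x, ((x.1 : ℝ) : ℂ) ^ p * ((x.2 k : ℂ) * (starRingEnd ℂ) (x.2 l : ℂ)) ∂ν
        = S p k l) :
    ∃ μ : Fin N → Fin N → MeasureTheory.ComplexMeasure ℝ, IsStieltjesSolution N S μ := by
  let t : StE N → ℝ := fun x => (x.1 : ℝ)
  have ht : Measurable t := by fun_prop
  let g : Fin N → Fin N → StE N → ℂ := fun k l x => (x.2 k : ℂ) * (starRingEnd ℂ) (x.2 l : ℂ)
  have hconj : Measurable fun z : ℂ => (starRingEnd ℂ) z := Complex.continuous_conj.measurable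
  have hg : ∀ k l, Measurable (g k l) := by
    intro k l
    have h1 : ∀ k, Measurable fun x : StE N => (x.2 k : ℂ) := fun k => by fun_prop
    exact (h1 k).mul (hconj.comp (h1 l))
  have hgb : ∀ k l x, ‖g k l x‖ ≤ 1 := by
    intro k l x
    have h1 : ‖(x.2 k : ℂ)‖ ≤ 1 := mem_closedBall_zero_iff.1 (x.2 k).2
    have h2 : ‖(x.2 l : ℂ)‖ ≤ 1 := mem_closedBall_zero_iff.1 (x.2 l).2
    simp only [g, norm_mul, RCLike.norm_conj]
    exact mul_le_one₀ h1 (norm_nonneg _) h2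
  have hgi : ∀ k l, Integrable (g k l) ν := fun k l =>
    (integrable_const (1 : ℝ)).mono' (hg k l).aestronglyMeasurable (Eventually.of_forall (hgb k l))
  choose sr hsr hfr using fun k l => sm_exists ν t ht (fun x => (g k l x).re)
    (Complex.measurable_re.comp (hg k l)) (fun x => (Complex.abs_re_le_norm _).trans (hgb k l x))
  choose si hsi hfi using fun k l => sm_exists ν t ht (fun x => (g k l x).im)
    (Complex.measurable_im.comp (hg k l)) (fun x => (Complex.abs_im_le_norm _).trans (hgb k l x))
  have happ : ∀ k l A, MeasurableSet A → (sr k l).toComplexMeasure (si k l) A =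
      ∫ x in t ⁻¹' A, g k l x ∂ν := by
    intro k l A hA
    rw [SignedMeasure.toComplexMeasure_apply, hsr k l A hA, hsi k l A hA]
    apply Complex.ext
    · exact integral_re (𝕜 := ℂ) (hgi k l).integrableOn
    · exact integral_im (𝕜 := ℂ) (hgi k l).integrableOn
  have hF : ∀ n : ℕ, Measurable ((Set.Ici (0 : ℝ)).indicator fun t => (t : ℂ) ^ n) := fun n =>
    Measurable.indicator (by fun_prop) measurableSet_Ici
  have hFt : ∀ (n : ℕ) (x : StE N), (Set.Ici (0 : ℝ)).indicator (fun t => (t : ℂ) ^ n) (t x) =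
      ((x.1 : ℝ) : ℂ) ^ n := fun n x => Set.indicator_of_mem (show (0 : ℝ) ≤ x.1 from x.1.2) _
  have hFi : ∀ n : ℕ, Integrable (fun x => (Set.Ici (0 : ℝ)).indicator (fun t => (t : ℂ) ^ n) (t x)) ν := by
    intro n
    simp_rw [hFt]
    have := (hInt n).ofReal (𝕜 := ℂ)
    simpa using this
  refine ⟨fun k l => (sr k l).toComplexMeasure (si k l), ?_, ?_, ?_, ?_⟩
  · intro k l A hA hA0
    rw [happ k l A hA]
    have : t ⁻¹' A = ∅ := by
      ext x
      simp only [Set.mem_preimage, Set.mem_empty_iff_false, iff_false]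
      intro h
      have := hA0 h
      exact absurd (show t x < 0 from this) (not_lt.2 x.1.2)
    simp [this]
  · intro v A hA
    simp_rw [happ _ _ A hA, ← integral_const_mul]
    have hi : ∀ k l, Integrable (fun x => v k * (starRingEnd ℂ) (v l) * g k l x) (ν.restrict (t ⁻¹' A)) :=
      fun k l => ((hgi k l).integrableOn).const_mul _
    simp_rw [← integral_finsetSum _ (fun l _ => hi _ l)]
    rw [← integral_finsetSum _ (fun k _ => integrable_finsetSum _ fun l _ => hi k l)]
    have : ∀ x, ∑ k, ∑ l, v k * (starRingEnd ℂ) (v l) * g k l x =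
        ((‖∑ k, v k * (x.2 k : ℂ)‖ ^ 2 : ℝ) : ℂ) := by
      intro x
      rw [← Complex.normSq_eq_norm_sq, ← Complex.mul_conj, map_sum, Finset.sum_mul_sum]
      refine Finset.sum_congr rfl fun k _ => Finset.sum_congr rfl fun l _ => ?_
      simp only [g, map_mul]; ring
    simp_rw [this]
    rw [integral_complex_ofReal]
    exact_mod_cast integral_nonneg fun x => by positivity
  · intro n k l
    have a := hfr k l _ (hF n) (hFi n)
    have b := hfi k l _ (hF n) (hFi n)
    unfold cmIntegrableWrt
    rw [SignedMeasure.re_toComplexMeasure, SignedMeasure.im_toComplexMeasure]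
    exact ⟨a.1, a.2.1, b.1, b.2.1⟩
  · intro n k l
    have a := hfr k l _ (hF n) (hFi n)
    have b := hfi k l _ (hF n) (hFi n)
    unfold cmIntegral
    rw [SignedMeasure.re_toComplexMeasure, SignedMeasure.im_toComplexMeasure, a.2.2, b.2.2,
      ← hmom n k l, smul_eq_mul, ← integral_const_mul, ← integral_add]
    · congr 1
      ext x
      rw [hFt]
      conv_rhs => rw [show (x.2 k : ℂ) * (starRingEnd ℂ) (x.2 l : ℂ) = g k l x from rfl,
        ← Complex.re_add_im (g k l x)]
      ring
    · refine (hFi n).norm.mono' ?_ (Eventually.of_forall fun x => ?_)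
      · have := hg k l; have := (hFi n).aestronglyMeasurable; fun_prop
      · rw [norm_mul, Complex.norm_real]
        exact mul_le_of_le_one_left (norm_nonneg _) ((Complex.abs_re_le_norm _).trans (hgb k l x))
    · refine Integrable.const_mul ?_ _
      refine (hFi n).norm.mono' ?_ (Eventually.of_forall fun x => ?_)
      · have := hg k l; have := (hFi n).aestronglyMeasurable; fun_prop
      · rw [norm_mul, Complex.norm_real]
        exact mul_le_of_le_one_left (norm_nonneg _) ((Complex.abs_im_le_norm _).trans (hgb k l x))

lemma sm_density (σ : Measure ℝ) [IsFiniteMeasure σ] (s : SignedMeasure ℝ)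
    (h1 : s.toJordanDecomposition.posPart ≪ σ) (h2 : s.toJordanDecomposition.negPart ≪ σ) :
    ∃ h : ℝ → ℝ, Integrable h σ ∧ (∀ A, MeasurableSet A → s A = ∫ x in A, h x ∂σ) ∧
      ∀ f : ℝ → ℂ, Integrable f s.toJordanDecomposition.posPart →
        Integrable f s.toJordanDecomposition.negPart →
        Integrable (fun x => (h x : ℂ) * f x) σ ∧
        ∫ x, f x ∂s.toJordanDecomposition.posPart - ∫ x, f x ∂s.toJordanDecomposition.negPart =
          ∫ x, (h x : ℂ) * f x ∂σ := by
  set P := s.toJordanDecomposition.posPart with hP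
  set Q := s.toJordanDecomposition.negPart with hQ
  refine ⟨fun x => (P.rnDeriv σ x).toReal - (Q.rnDeriv σ x).toReal,
    Measure.integrable_toReal_rnDeriv.sub Measure.integrable_toReal_rnDeriv, ?_, ?_⟩
  · intro A hA
    rw [integral_sub Measure.integrable_toReal_rnDeriv.integrableOn
      Measure.integrable_toReal_rnDeriv.integrableOn, Measure.setIntegral_toReal_rnDeriv h1,
      Measure.setIntegral_toReal_rnDeriv h2]
    exact s.apply_eq_posPart_real_sub_negPart_real hA
  · intro f f1 f2
    have e : ∀ x, (((P.rnDeriv σ x).toReal - (Q.rnDeriv σ x).toReal : ℝ) : ℂ) * f x =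
        (P.rnDeriv σ x).toReal • f x - (Q.rnDeriv σ x).toReal • f x := by
      intro x; simp only [Complex.real_smul]; push_cast; ring
    have i1 := (integrable_rnDeriv_smul_iff h1).2 f1
    have i2 := (integrable_rnDeriv_smul_iff h2).2 f2
    simp_rw [e]
    exact ⟨i1.sub i2, by rw [integral_sub i1 i2, integral_rnDeriv_smul h1, integral_rnDeriv_smul h2]⟩

lemma forward {N : ℕ} {S : ℕ → Matrix (Fin N) (Fin N) ℂ}
    (hherm : ∀ n, (S n).IsHermitian) (μ : Fin N → Fin N → MeasureTheory.ComplexMeasure ℝ)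
    (hμ : IsStieltjesSolution N S μ) (n e : ℕ) :
    (Matrix.of fun p q : Fin (n + 1) × Fin N =>
          S ((p.1 : ℕ) + (q.1 : ℕ) + e) p.2 q.2).PosSemidef := by
  let τ : Fin N → Fin N → Measure ℝ := fun k l =>
    (ComplexMeasure.re (μ k l)).toJordanDecomposition.posPart +
    (ComplexMeasure.re (μ k l)).toJordanDecomposition.negPart +
    ((ComplexMeasure.im (μ k l)).toJordanDecomposition.posPart +
    (ComplexMeasure.im (μ k l)).toJordanDecomposition.negPart)
  let σ : Measure ℝ := Measure.sum fun kl : Fin N × Fin N => τ kl.1 kl.2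
  have hσ : IsFiniteMeasure σ := by
    refine ⟨?_⟩
    simp only [σ, Measure.sum_fintype, Measure.finsetSum_apply]
    exact ENNReal.sum_lt_top.2 fun a _ => measure_lt_top _ _
  have hle : ∀ k l, τ k l ≤ σ := fun k l => Measure.le_sum (fun kl : Fin N × Fin N => τ kl.1 kl.2) (k, l)
  have ac : ∀ k l (m : Measure ℝ), m ≤ τ k l → m ≪ σ := fun k l m h =>
    Measure.absolutelyContinuous_of_le (h.trans (hle k l))
  choose hr hri hra hrf using fun k l => sm_density σ (ComplexMeasure.re (μ k l))
    (ac k l _ (by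
      simp only [τ]
      exact (Measure.le_add_right le_rfl).trans (Measure.le_add_right le_rfl)))
    (ac k l _ (by
      simp only [τ]
      exact (Measure.le_add_left le_rfl).trans (Measure.le_add_right le_rfl)))
  choose hi hii hia hif using fun k l => sm_density σ (ComplexMeasure.im (μ k l))
    (ac k l _ (by
      simp only [τ]
      exact (Measure.le_add_right le_rfl).trans (Measure.le_add_left le_rfl)))
    (ac k l _ (by
      simp only [τ]
      exact (Measure.le_add_left le_rfl).trans (Measure.le_add_left le_rfl)))
  let h : Fin N → Fin N → ℝ → ℂ := fun k l x => (hr k l x : ℂ) + Complex.I * (hi k l x : ℂ)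
  have hInt : ∀ k l, Integrable (h k l) σ := fun k l =>
    ((hri k l).ofReal (𝕜 := ℂ)).add (((hii k l).ofReal (𝕜 := ℂ)).const_mul Complex.I)
  have happ : ∀ k l A, MeasurableSet A → μ k l A = ∫ x in A, h k l x ∂σ := by
    intro k l A hA
    have e1 : (μ k l A).re = ∫ x in A, hr k l x ∂σ := hra k l A hA
    have e2 : (μ k l A).im = ∫ x in A, hi k l x ∂σ := hia k l A hA
    rw [← Complex.re_add_im (μ k l A), e1, e2, ← integral_complex_ofReal, ← integral_complex_ofReal,
      mul_comm, ← integral_const_mul, ← integral_add]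
    · exact ((hri k l).ofReal (𝕜 := ℂ)).integrableOn
    · exact (((hii k l).ofReal (𝕜 := ℂ)).const_mul Complex.I).integrableOn
  let F : ℕ → ℝ → ℂ := fun p => (Set.Ici (0 : ℝ)).indicator fun t => (t : ℂ) ^ p
  have hmom : ∀ p k l, Integrable (fun x => h k l x * F p x) σ ∧ ∫ x, h k l x * F p x ∂σ = S p k l := by
    intro p k l
    obtain ⟨a1, a2, a3, a4⟩ := hμ.integrable p k l
    obtain ⟨b1, b2⟩ := hrf k l _ a1 a2
    obtain ⟨c1, c2⟩ := hif k l _ a3 a4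
    have ee : ∀ x, h k l x * F p x = (hr k l x : ℂ) * F p x + Complex.I * ((hi k l x : ℂ) * F p x) := by
      intro x; simp only [h]; ring
    simp_rw [ee]
    refine ⟨b1.add (c1.const_mul _), ?_⟩
    rw [integral_add b1 (c1.const_mul _), integral_const_mul, ← hμ.moment p k l]
    unfold cmIntegral
    rw [b2, c2, smul_eq_mul]
  have hpos : ∀ᵐ x ∂σ, ∀ v : Fin N → ℂ, 0 ≤ (∑ k, ∑ l, v k * (starRingEnd ℂ) (v l) * h k l x).re := by
    have h1 : ∀ v : Fin N → ℂ, ∀ᵐ x ∂σ, 0 ≤ (∑ k, ∑ l, v k * (starRingEnd ℂ) (v l) * h k l x).re := by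
      intro v
      have hi1 : ∀ k l, Integrable (fun x => v k * (starRingEnd ℂ) (v l) * h k l x) σ :=
        fun k l => (hInt k l).const_mul _
      have hi2 : Integrable (fun x => ∑ k, ∑ l, v k * (starRingEnd ℂ) (v l) * h k l x) σ :=
        integrable_finsetSum _ fun k _ => integrable_finsetSum _ fun l _ => hi1 k l
      refine ae_nonneg_of_forall_setIntegral_nonneg
        (f := fun x => (∑ k, ∑ l, v k * (starRingEnd ℂ) (v l) * h k l x).re) hi2.re ?_
      intro A hA _
      have := integral_re (𝕜 := ℂ) hi2.integrableOn (μ := σ.restrict A)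
      simp only [RCLike.re_to_complex] at this
      rw [this]
      have h3 := hμ.nonneg v A hA
      simp_rw [happ _ _ A hA, ← integral_const_mul] at h3
      simp_rw [← integral_finsetSum _ (fun l _ => (hi1 _ l).integrableOn)] at h3
      rw [← integral_finsetSum _ (fun k _ => integrable_finsetSum _ fun l _ => (hi1 k l).integrableOn)] at h3
      exact (Complex.le_def.1 h3).1
    have h2 : ∀ᵐ x ∂σ, ∀ j : ℕ, 0 ≤ (∑ k, ∑ l, TopologicalSpace.denseSeq (Fin N → ℂ) j k *
        (starRingEnd ℂ) (TopologicalSpace.denseSeq (Fin N → ℂ) j l) * h k l x).re :=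
      ae_all_iff.2 fun j => h1 _
    filter_upwards [h2] with x hx v
    refine DenseRange.induction_on (TopologicalSpace.denseRange_denseSeq (Fin N → ℂ))
      (p := fun v => 0 ≤ (∑ k, ∑ l, v k * (starRingEnd ℂ) (v l) * h k l x).re) v ?_ hx
    refine isClosed_le continuous_const ?_
    have : Continuous fun z : ℂ => (starRingEnd ℂ) z := Complex.continuous_conj
    have h' := Complex.continuous_re
    fun_prop
  have hH : (Matrix.of fun p q : Fin (n + 1) × Fin N =>
          S ((p.1 : ℕ) + (q.1 : ℕ) + e) p.2 q.2).IsHermitian := by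
    ext p q
    rw [Matrix.conjTranspose_apply, Matrix.of_apply, Matrix.of_apply, (hherm _).apply,
      add_comm (p.1 : ℕ)]
  refine PosSemidef.of_dotProduct_mulVec_nonneg hH fun x => ?_
  rw [Complex.le_def]
  refine ⟨?_, (hH.im_star_dotProduct_mulVec_self x).symm⟩
  have hsum : star x ⬝ᵥ ((Matrix.of fun p q : Fin (n + 1) × Fin N =>
          S ((p.1 : ℕ) + (q.1 : ℕ) + e) p.2 q.2) *ᵥ x) =
      ∫ t, ∑ p : Fin (n + 1) × Fin N, ∑ q : Fin (n + 1) × Fin N, star (x p) * x q *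
        (h p.2 q.2 t * F ((p.1 : ℕ) + (q.1 : ℕ) + e) t) ∂σ := by
    rw [integral_finsetSum _ fun p _ => integrable_finsetSum _ fun q _ => (hmom _ _ _).1.const_mul _]
    simp only [dotProduct, mulVec, Finset.mul_sum]
    refine Finset.sum_congr rfl fun p _ => ?_
    rw [integral_finsetSum _ fun q _ => (hmom _ _ _).1.const_mul _]
    refine Finset.sum_congr rfl fun q _ => ?_
    rw [integral_const_mul, (hmom _ _ _).2]
    simp only [Pi.star_apply, Matrix.of_apply]
    ring
  rw [hsum]
  have hI : Integrable (fun t => ∑ p : Fin (n + 1) × Fin N, ∑ q : Fin (n + 1) × Fin N, star (x p) * x q *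
        (h p.2 q.2 t * F ((p.1 : ℕ) + (q.1 : ℕ) + e) t)) σ :=
    integrable_finsetSum _ fun p _ => integrable_finsetSum _ fun q _ => (hmom _ _ _).1.const_mul _
  have hre := integral_re (𝕜 := ℂ) hI
  simp only [RCLike.re_to_complex] at hre
  rw [← hre, Complex.zero_re]
  refine integral_nonneg_of_ae ?_
  filter_upwards [hpos] with t ht
  change 0 ≤ (_ : ℂ).re
  by_cases h0 : 0 ≤ t
  · have hF : ∀ p, F p t = (t : ℂ) ^ p := fun p => Set.indicator_of_mem (show t ∈ Set.Ici 0 from h0) _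
    have := ht fun k => ∑ i : Fin (n + 1), star (x (i, k)) * (t : ℂ) ^ (i : ℕ)
    have heq : ∑ p : Fin (n + 1) × Fin N, ∑ q : Fin (n + 1) × Fin N, star (x p) * x q *
        (h p.2 q.2 t * F ((p.1 : ℕ) + (q.1 : ℕ) + e) t) =
        ((t ^ e : ℝ) : ℂ) * ∑ k, ∑ l, (∑ i : Fin (n + 1), star (x (i, k)) * (t : ℂ) ^ (i : ℕ)) *
          (starRingEnd ℂ) (∑ i : Fin (n + 1), star (x (i, l)) * (t : ℂ) ^ (i : ℕ)) * h k l t := by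
      simp_rw [hF, map_sum, Finset.sum_mul_sum, Finset.sum_mul, Finset.mul_sum, Fintype.sum_prod_type]
      rw [Finset.sum_comm]
      refine Finset.sum_congr rfl fun k _ => ?_
      refine (Finset.sum_congr rfl fun i _ => Finset.sum_comm).trans ?_
      rw [Finset.sum_comm]
      refine Finset.sum_congr rfl fun l _ => Finset.sum_congr rfl fun i _ =>
        Finset.sum_congr rfl fun j _ => ?_
      simp only [map_mul, map_pow, Complex.conj_ofReal, Complex.star_def, Complex.conj_conj]
      push_cast
      ring
    rw [heq, Complex.re_ofReal_mul]
    exact mul_nonneg (by positivity) this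
  · have hF : ∀ p, F p t = 0 := fun p => Set.indicator_of_notMem (show t ∉ Set.Ici 0 from h0) _
    simp [hF]


end Helpers

/-- Theorem 2.2 of the paper.  The matrix Stieltjes moment problem for
a sequence `(S n)` of Hermitian `N×N` complex matrices has a solution iff for every
`n ∈ ℕ` both block Hankel matrices `Γ n = (S (i+j))_{i,j ≤ n}` and
`Γ̃ n = (S (i+j+1))_{i,j ≤ n}` — viewed as complex matrices of size `(n+1)·N` indexed by
`Fin (n+1) × Fin N` — are positive semidefinite. -/
theorem stieltjes_moment_problem_solvable_iff
    (N : ℕ) (hN : 1 ≤ N) (S : ℕ → Matrix (Fin N) (Fin N) ℂ)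
    (hherm : ∀ n, (S n).IsHermitian) :
    (∃ μ : Fin N → Fin N → MeasureTheory.ComplexMeasure ℝ, IsStieltjesSolution N S μ) ↔
      (∀ n : ℕ,
        (Matrix.of fun p q : Fin (n + 1) × Fin N =>
          S ((p.1 : ℕ) + (q.1 : ℕ)) p.2 q.2).PosSemidef ∧
        (Matrix.of fun p q : Fin (n + 1) × Fin N =>
          S ((p.1 : ℕ) + (q.1 : ℕ) + 1) p.2 q.2).PosSemidef) := by
  constructor
  · rintro ⟨μ, hμ⟩ n
    exact ⟨forward hherm μ hμ n 0, forward hherm μ hμ n 1⟩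
  · intro h
    obtain ⟨ν, hfin, hInt, hmom⟩ := limit_measure (S := S) fun n => by
      obtain ⟨lam, w, hrep⟩ := finite_rep (fun n => (h n).1) (fun n => (h n).2) n
      exact disc_measure n lam w (fun p hp => hrep p (by omega))
    exact backward ν hInt hmom
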